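/- arXiv:1102.3235 — 2 statements merged into one kernel-verified Lean document; each statement's English description precedes it below -/
import Mathlib

section
/- Let (Ω, P) be a probability space, m ≥ 1, and let X : Fin m → Ω → 𝒳, Y : Fin m → Ω → 𝒴 be families of measurable random variables with values in finite measurable spaces with measurable singletons, and C : Ω → 𝒞 another such random variable. For k ∈ [1:m] write X^{<k} for the tuple (X_1,…,X_{k−1}), Y^{≤k} for (Y_1,…,Y_k), Y^{<k} for (Y_1,…,Y_{k−1}), and X^{≥ℓ} for (X_ℓ,…,X_m). Then ∑_{k=1}^{m} I[X_k : Y^{≤k} | ⟨X^{<k}, C⟩] = ∑_{ℓ=1}^{m} I[X^{≥ℓ} : Y_ℓ | ⟨X^{<ℓ}, Y^{<ℓ}, C⟩]. -/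
open MeasureTheory

/-- Shannon entropy `H[X]` of a finitely-valued random variable `X` on a measure space. -/
noncomputable def entropy {Ω S : Type*} [MeasurableSpace Ω] [Fintype S] [MeasurableSpace S]
    (P : Measure Ω) (X : Ω → S) : ℝ :=
  ∑ x : S, Real.negMulLog ((P.map X) {x}).toReal

/-- Conditional mutual information
`I[X : Y | Z] = H[X, Z] + H[Y, Z] − H[X, Y, Z] − H[Z]`. -/
noncomputable def condMutualInfo {Ω S T U : Type*} [MeasurableSpace Ω]
    [Fintype S] [MeasurableSpace S] [Fintype T] [MeasurableSpace T]
    [Fintype U] [MeasurableSpace U]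
    (P : Measure Ω) (X : Ω → S) (Y : Ω → T) (Z : Ω → U) : ℝ :=
  entropy P (fun ω => (X ω, Z ω)) + entropy P (fun ω => (Y ω, Z ω))
    - entropy P (fun ω => (X ω, Y ω, Z ω)) - entropy P Z

theorem entropy_congr_ker {Ω S T : Type*} [MeasurableSpace Ω]
    [Fintype S] [MeasurableSpace S] [MeasurableSingletonClass S]
    [Fintype T] [MeasurableSpace T] [MeasurableSingletonClass T]
    (P : Measure Ω) (A : Ω → S) (B : Ω → T) (hA : Measurable A) (hB : Measurable B)
    (h : ∀ ω ω', A ω = A ω' ↔ B ω = B ω') : entropy P A = entropy P B := by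
  classical
  unfold entropy
  simp only [Measure.map_apply hA (measurableSet_singleton _),
    Measure.map_apply hB (measurableSet_singleton _)]
  have exA : ∀ a : S, Real.negMulLog (P (A ⁻¹' {a})).toReal ≠ 0 → ∃ ω, A ω = a := by
    intro a ha
    by_contra hc
    apply ha
    have : A ⁻¹' {a} = ∅ := by
      ext ω
      simp only [Set.mem_preimage, Set.mem_singleton_iff, Set.mem_empty_iff_false, iff_false]
      exact fun e => hc ⟨ω, e⟩
    simp [this]
  have exB : ∀ b : T, Real.negMulLog (P (B ⁻¹' {b})).toReal ≠ 0 → ∃ ω, B ω = b := by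
    intro a ha
    by_contra hc
    apply ha
    have : B ⁻¹' {a} = ∅ := by
      ext ω
      simp only [Set.mem_preimage, Set.mem_singleton_iff, Set.mem_empty_iff_false, iff_false]
      exact fun e => hc ⟨ω, e⟩
    simp [this]
  have key : ∀ ω, A ⁻¹' {A ω} = B ⁻¹' {B ω} := by
    intro ω
    ext ω'
    simpa using h ω' ω
  refine Finset.sum_bij_ne_zero (fun a _ ha => B (exA a ha).choose) ?_ ?_ ?_ ?_
  · intros; exact Finset.mem_univ _
  · intro a _ ha a' _ ha' e
    have := (h _ _).2 e
    rwa [(exA a ha).choose_spec, (exA a' ha').choose_spec] at this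
  · intro b _ hb
    obtain ⟨ω, rfl⟩ := exB b hb
    have ha : Real.negMulLog (P (A ⁻¹' {A ω})).toReal ≠ 0 := by rwa [key]
    exact ⟨A ω, Finset.mem_univ _, ha, (h _ _).1 (exA _ ha).choose_spec⟩
  · intro a _ ha
    rw [← key, (exA a ha).choose_spec]

/-- Joint entropy of the first `a` of the `X`, the first `b` of the `Y`, and `C`. -/
noncomputable def jointH {Ω 𝒳 𝒴 𝒞 : Type*} [MeasurableSpace Ω]
    [Fintype 𝒳] [MeasurableSpace 𝒳] [Fintype 𝒴] [MeasurableSpace 𝒴]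
    [Fintype 𝒞] [MeasurableSpace 𝒞] {m : ℕ}
    (X : Fin m → Ω → 𝒳) (Y : Fin m → Ω → 𝒴) (C : Ω → 𝒞) (P : Measure Ω) (a b : ℕ) : ℝ :=
  entropy P (fun ω => ((fun i : {i : Fin m // i.val < a} => X i.1 ω),
    (fun i : {i : Fin m // i.val < b} => Y i.1 ω), C ω))

theorem entropy_eq_jointH {Ω 𝒳 𝒴 𝒞 S : Type*} [MeasurableSpace Ω]
    [Fintype 𝒳] [MeasurableSpace 𝒳] [MeasurableSingletonClass 𝒳]
    [Fintype 𝒴] [MeasurableSpace 𝒴] [MeasurableSingletonClass 𝒴]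
    [Fintype 𝒞] [MeasurableSpace 𝒞] [MeasurableSingletonClass 𝒞]
    [Fintype S] [MeasurableSpace S] [MeasurableSingletonClass S] {m : ℕ}
    {X : Fin m → Ω → 𝒳} {Y : Fin m → Ω → 𝒴} {C : Ω → 𝒞}
    (hX : ∀ k, Measurable (X k)) (hY : ∀ k, Measurable (Y k)) (hC : Measurable C)
    (P : Measure Ω) (a b : ℕ) (A : Ω → S) (hA : Measurable A)
    (h : ∀ ω ω', A ω = A ω' ↔ (∀ i : Fin m, i.val < a → X i ω = X i ω') ∧
      (∀ i : Fin m, i.val < b → Y i ω = Y i ω') ∧ C ω = C ω') :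
    entropy P A = jointH X Y C P a b := by
  unfold jointH
  refine entropy_congr_ker P A _ hA (by fun_prop) ?_
  intro ω ω'
  rw [h]
  simp [funext_iff]

theorem forall_castLE_iff {m k : ℕ} (hk : k ≤ m) (p : Fin m → Prop) :
    (∀ i : Fin k, p (Fin.castLE hk i)) ↔ ∀ i : Fin m, i.val < k → p i :=
  ⟨fun h i hi => h ⟨i.val, hi⟩, fun h i => h _ i.isLt⟩

theorem forall_lt_succ_iff {m : ℕ} (k : Fin m) (p : Fin m → Prop) :
    (∀ i : Fin m, i.val < k.val + 1 → p i) ↔ p k ∧ ∀ i : Fin m, i.val < k.val → p i := by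
  constructor
  · exact fun h => ⟨h k (by omega), fun i hi => h i (by omega)⟩
  · rintro ⟨h1, h2⟩ i hi
    rcases Nat.lt_succ_iff_lt_or_eq.1 hi with h | h
    · exact h2 i h
    · rw [Fin.ext h]; exact h1

theorem forall_all_iff {m : ℕ} (l : Fin m) (p : Fin m → Prop) :
    (∀ i : Fin m, i.val < m → p i) ↔ (∀ i : Fin (m - l.val), p ⟨l.val + i.val, by omega⟩) ∧
      ∀ i : Fin m, i.val < l.val → p i := by
  constructor
  · exact fun h => ⟨fun i => h _ (by simp; omega), fun i _ => h i i.isLt⟩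
  · rintro ⟨h1, h2⟩ i _
    by_cases hi : i.val < l.val
    · exact h2 i hi
    · have := h1 ⟨i.val - l.val, by omega⟩
      have e : (⟨l.val + (i.val - l.val), by omega⟩ : Fin m) = i := Fin.ext (by simp; omega)
      rwa [e] at this

/-- For families `X_1,…,X_m`, `Y_1,…,Y_m` and `C` of finitely-valued random
variables on a probability space (indices `0,…,m−1` in `Fin m`, matching the paper's `1,…,m`),
`∑_{k=1}^{m} I[X_k : Y^{≤k} | ⟨X^{<k}, C⟩]
  = ∑_{ℓ=1}^{m} I[X^{≥ℓ} : Y_ℓ | ⟨X^{<ℓ}, Y^{<ℓ}, C⟩]`,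
where `X^{<k} = (X_1,…,X_{k−1})`, `Y^{≤k} = (Y_1,…,Y_k)`, `Y^{<k} = (Y_1,…,Y_{k−1})` and
`X^{≥ℓ} = (X_ℓ,…,X_m)`. -/
theorem sum_condMutualInfo_chain_swap
    {Ω 𝒳 𝒴 𝒞 : Type*} [MeasurableSpace Ω]
    [Fintype 𝒳] [MeasurableSpace 𝒳] [MeasurableSingletonClass 𝒳]
    [Fintype 𝒴] [MeasurableSpace 𝒴] [MeasurableSingletonClass 𝒴]
    [Fintype 𝒞] [MeasurableSpace 𝒞] [MeasurableSingletonClass 𝒞]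
    (m : ℕ) (hm : 1 ≤ m)
    (X : Fin m → Ω → 𝒳) (Y : Fin m → Ω → 𝒴) (C : Ω → 𝒞)
    (hX : ∀ k, Measurable (X k)) (hY : ∀ k, Measurable (Y k)) (hC : Measurable C)
    (P : Measure Ω) [IsProbabilityMeasure P] :
    ∑ k : Fin m,
        condMutualInfo P (X k)
          (fun ω => fun i : Fin (k.val + 1) => Y (Fin.castLE k.isLt i) ω)
          (fun ω => ((fun i : Fin k.val => X (Fin.castLE k.isLt.le i) ω), C ω))
      = ∑ l : Fin m,
        condMutualInfo P
          (fun ω => fun i : Fin (m - l.val) =>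
            X ⟨l.val + i.val, by have h1 := i.isLt; have h2 := l.isLt; omega⟩ ω)
          (Y l)
          (fun ω => ((fun i : Fin l.val => X (Fin.castLE l.isLt.le i) ω),
                     (fun i : Fin l.val => Y (Fin.castLE l.isLt.le i) ω), C ω)) := by
  set H := jointH X Y C P with hH
  have L : ∀ k : Fin m, condMutualInfo P (X k)
          (fun ω => fun i : Fin (k.val + 1) => Y (Fin.castLE k.isLt i) ω)
          (fun ω => ((fun i : Fin k.val => X (Fin.castLE k.isLt.le i) ω), C ω))
      = H (k.val + 1) 0 + H k.val (k.val + 1) - H (k.val + 1) (k.val + 1) - H k.val 0 := by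
    intro k
    unfold condMutualInfo
    congr 1
    · congr 1
      · congr 1
        all_goals
          refine entropy_eq_jointH hX hY hC P _ _ _ (by fun_prop) fun ω ω' => ?_
          simp only [Prod.mk.injEq, funext_iff]
          rw [forall_castLE_iff k.isLt.le (fun i => X i ω = X i ω')]
        · rw [forall_lt_succ_iff k (fun i => X i ω = X i ω')]
          simp; tauto
        · rw [forall_castLE_iff k.isLt (fun i => Y i ω = Y i ω')]
          tauto
      · refine entropy_eq_jointH hX hY hC P _ _ _ (by fun_prop) fun ω ω' => ?_
        simp only [Prod.mk.injEq, funext_iff]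
        rw [forall_castLE_iff k.isLt.le (fun i => X i ω = X i ω'),
          forall_castLE_iff k.isLt (fun i => Y i ω = Y i ω'),
          forall_lt_succ_iff k (fun i => X i ω = X i ω')]
        tauto
    · refine entropy_eq_jointH hX hY hC P _ _ _ (by fun_prop) fun ω ω' => ?_
      simp only [Prod.mk.injEq, funext_iff]
      rw [forall_castLE_iff k.isLt.le (fun i => X i ω = X i ω')]
      simp
  have R : ∀ l : Fin m, condMutualInfo P
          (fun ω => fun i : Fin (m - l.val) =>
            X ⟨l.val + i.val, by have h1 := i.isLt; have h2 := l.isLt; omega⟩ ω)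
          (Y l)
          (fun ω => ((fun i : Fin l.val => X (Fin.castLE l.isLt.le i) ω),
                     (fun i : Fin l.val => Y (Fin.castLE l.isLt.le i) ω), C ω))
      = H m l.val + H l.val (l.val + 1) - H m (l.val + 1) - H l.val l.val := by
    intro k
    unfold condMutualInfo
    congr 1
    · congr 1
      · congr 1
        all_goals
          refine entropy_eq_jointH hX hY hC P _ _ _ (by fun_prop) fun ω ω' => ?_
          simp only [Prod.mk.injEq, funext_iff]
          rw [forall_castLE_iff k.isLt.le (fun i => X i ω = X i ω'),
            forall_castLE_iff k.isLt.le (fun i => Y i ω = Y i ω')]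
        · rw [forall_all_iff k (fun i => X i ω = X i ω')]
          tauto
        · rw [forall_lt_succ_iff k (fun i => Y i ω = Y i ω')]
          tauto
      · refine entropy_eq_jointH hX hY hC P _ _ _ (by fun_prop) fun ω ω' => ?_
        simp only [Prod.mk.injEq, funext_iff]
        rw [forall_castLE_iff k.isLt.le (fun i => X i ω = X i ω'),
          forall_castLE_iff k.isLt.le (fun i => Y i ω = Y i ω'),
          forall_all_iff k (fun i => X i ω = X i ω'),
          forall_lt_succ_iff k (fun i => Y i ω = Y i ω')]
        tauto
    · refine entropy_eq_jointH hX hY hC P _ _ _ (by fun_prop) fun ω ω' => ?_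
      simp only [Prod.mk.injEq, funext_iff]
      rw [forall_castLE_iff k.isLt.le (fun i => X i ω = X i ω'),
        forall_castLE_iff k.isLt.le (fun i => Y i ω = Y i ω')]
  rw [Finset.sum_congr rfl fun k _ => L k, Finset.sum_congr rfl fun l _ => R l]
  rw [Fin.sum_univ_eq_sum_range (fun k => H (k + 1) 0 + H k (k + 1) - H (k + 1) (k + 1) - H k 0) m,
    Fin.sum_univ_eq_sum_range (fun l => H m l + H l (l + 1) - H m (l + 1) - H l l) m]
  have t1 := Finset.sum_range_sub (fun k => H k 0) m
  have t2 := Finset.sum_range_sub (fun k => H m k) m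
  have t3 := Finset.sum_range_sub (fun k => H k k) m
  simp only [Finset.sum_sub_distrib, Finset.sum_add_distrib] at t1 t2 t3 ⊢
  linarith
end

section
/- Let K ≥ 1 and let Σ be a K × K complex Hermitian matrix with all diagonal entries equal to 1 such that, for every k ∈ [2:K], the vector ρ_{k−1} ∈ ℂ^{k−1} consisting of the first k−1 entries of the k-th column of Σ satisfies: the leading principal (k−1) × (k−1) submatrix of Σ minus the outer product ρ_{k−1}ρ_{k−1}ᴴ is positive semidefinite. Then Σ is positive semidefinite. -/
open scoped ComplexOrder

/-- Let `A` be a `K × K` complex Hermitian matrix with unit diagonal such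
that for every column `k` the leading principal submatrix of size `k` (rows/columns with
index `< k`) minus the rank-one outer product `ρₖρₖᴴ` of the first `k` entries of the `k`-th
column is positive semidefinite.  Then `A` is positive semidefinite.
(Here `k` ranges over all of `Fin K`; for `k = 0` the condition is on the empty matrix and is
vacuous, so the conditions match the paper's `k ∈ [2:K]` after reindexing.) -/
theorem recursive_covariance_posSemidef {K : ℕ} (hK : 1 ≤ K)
    (A : Matrix (Fin K) (Fin K) ℂ)
    (hherm : A.IsHermitian) (hdiag : ∀ i, A i i = 1)
    (hcols : ∀ k : Fin K,
      ((Matrix.of fun i j : Fin k.val =>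
          A (Fin.castLE k.isLt.le i) (Fin.castLE k.isLt.le j)) -
        Matrix.vecMulVec (fun i : Fin k.val => A (Fin.castLE k.isLt.le i) k)
          (star fun i : Fin k.val => A (Fin.castLE k.isLt.le i) k)).PosSemidef) :
    A.PosSemidef := by
  obtain ⟨n, rfl⟩ : ∃ n, K = n + 1 := ⟨K - 1, by omega⟩
  have h := hcols (Fin.last n)
  have h1 := h.mul_mul_conjTranspose_same
    (Matrix.of fun (i : Fin (n + 1)) (j : Fin n) => if i = j.castSucc then (1 : ℂ) else 0)
  have h2 := Matrix.posSemidef_vecMulVec_self_star (fun i => A i (Fin.last n))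
  have h3 := h1.add h2
  convert h3 using 1
  have hs : ∀ i j, star (A i j) = A j i := fun i j => hherm.apply j i
  have hc : ∀ i : Fin n, Fin.castLE (Fin.last n).isLt.le i = i.castSucc := fun i => rfl
  have hne : ∀ i : Fin n, Fin.last n ≠ i.castSucc := fun i => (Fin.castSucc_lt_last i).ne'
  ext i j
  simp only [Matrix.add_apply, Matrix.mul_apply, Matrix.conjTranspose_apply, Matrix.of_apply,
    Matrix.vecMulVec_apply, Pi.star_apply, hs, Matrix.sub_apply, hc]
  refine Fin.lastCases ?_ (fun i => ?_) i <;> refine Fin.lastCases ?_ (fun j => ?_) j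
  · simp [hne, hdiag]
  · simp [hne, hdiag]
  · simp [hne, hdiag]
  · have e : ∀ (a b : Fin n), (a.castSucc = b.castSucc) = (a = b) := fun a b => by simp
    simp only [e, apply_ite star, star_one, star_zero, mul_ite, mul_one, mul_zero, ite_mul,
      one_mul, zero_mul]
    erw [Finset.sum_ite_eq]
    simp only [Finset.mem_univ, if_true]
    erw [Finset.sum_ite_eq]
    simp
end
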